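/- arXiv:1907.05965 — 3 statements merged into one kernel-verified Lean document; each statement's English description precedes it below -/
import Mathlib

section
/- Let m, n, S ≥ 1. For Lebesgue-almost every pair (P, Q) ∈ ℝ^{S×m} × ℝ^{S×n}, every square submatrix of the row-wise Khatri-Rao product F = P ⊙ Q is invertible; that is, for every s ≥ 1, every row-index set R ⊆ [S] with |R| = s, and every column-index set C ⊆ [m]×[n] with |C| = s, the submatrix [F]_{R,C} is invertible. -/
open MeasureTheory

/-- The row-wise Khatri-Rao product of `P : ℝ^{S×m}` and `Q : ℝ^{S×n}`. -/
def rowKhatriRao {S m n : Type*} (P : Matrix S m ℝ) (Q : Matrix S n ℝ) :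
    Matrix S (m × n) ℝ :=
  fun i jl => P i jl.1 * Q i jl.2

/-- A measurable set that meets every line in a fixed direction in a countable set is null. -/
lemma ae_notMem_of_countable_lines {E : Type*} [NormedAddCommGroup E] [NormedSpace ℝ E]
    [FiniteDimensional ℝ E] [MeasurableSpace E] [BorelSpace E] (μ : Measure E)
    [μ.IsAddHaarMeasure] {Z : Set E} (hZ : MeasurableSet Z) (v : E)
    (h : ∀ x : E, {t : ℝ | x + t • v ∈ Z}.Countable) : ∀ᵐ x ∂μ, x ∉ Z := by
  refine ae_mem_of_ae_add_linearMap_mem (LinearMap.toSpanSingleton ℝ E v) volume μ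
    hZ.compl fun x => ?_
  filter_upwards [(h x).ae_notMem volume] with t ht
  show x + (LinearMap.toSpanSingleton ℝ E v) t ∉ Z
  simpa using ht

/-- If a minor of the row-wise Khatri-Rao product is nonzero at `(P₀, Q₀)`, then it vanishes at only
finitely many points of each line through `(P₀, Q₀)`. -/
lemma finite_setOf_det_rowKhatriRao_smul_add_eq_zero {S m n : Type*} {s : ℕ}
    {r : Fin s → S} {c : Fin s → m × n} {P₀ P : Matrix S m ℝ} {Q₀ Q : Matrix S n ℝ}
    (h₀ : ((rowKhatriRao P₀ Q₀).submatrix r c).det ≠ 0) :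
    {u : ℝ | ((rowKhatriRao (u • P + P₀) (u • Q + Q₀)).submatrix r c).det = 0}.Finite := by
  let M : Matrix (Fin s) (Fin s) (Polynomial ℝ) := Matrix.of fun i j =>
    (.X * .C (P (r i) (c j).1) + .C (P₀ (r i) (c j).1)) *
      (.X * .C (Q (r i) (c j).2) + .C (Q₀ (r i) (c j).2))
  have hM (u : ℝ) : M.det.eval u =
      ((rowKhatriRao (u • P + P₀) (u • Q + Q₀)).submatrix r c).det := by
    rw [← Polynomial.coe_evalRingHom, RingHom.map_det]
    congr 1
    ext i j
    simp [M, rowKhatriRao, mul_comm u]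
  have hne : M.det ≠ 0 := fun h => h₀ (by simpa [h] using (hM 0).symm)
  refine (Polynomial.finite_setOfPred_isRoot hne).subset fun u hu => ?_
  simpa [Polynomial.IsRoot, hM] using hu

lemma rowKhatriRao_smul_smul {S m n : Type*} (a b : ℝ) (P : Matrix S m ℝ) (Q : Matrix S n ℝ) :
    rowKhatriRao (a • P) (b • Q) = (a * b) • rowKhatriRao P Q := by
  ext i j
  simp [rowKhatriRao]
  ring

/-- Every minor of the row-wise Khatri-Rao product is nonzero for some pair of factors. -/
lemma exists_det_rowKhatriRao_submatrix_ne_zero {S m n : Type*} {s : ℕ}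
    {r : Fin s → S} (hr : r.Injective) {c : Fin s → m × n} (hc : c.Injective) :
    ∃ (P : Matrix S m ℝ) (Q : Matrix S n ℝ),
      ((rowKhatriRao P Q).submatrix r c).det ≠ 0 := by
  classical
  refine ⟨fun i j => if ∃ k, r k = i ∧ (c k).1 = j then 1 else 0,
    fun i l => if ∃ k, r k = i ∧ (c k).2 = l then 1 else 0, ?_⟩
  convert one_ne_zero (α := ℝ)
  convert Matrix.det_one (n := Fin s) (R := ℝ)
  ext i j
  simp [rowKhatriRao, hr.eq_iff, Matrix.one_apply, ← ite_and, ← Prod.ext_iff, hc.eq_iff, and_comm]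

instance isAddHaarMeasure_volume_pi_pi {S m : Type*} [Fintype S] [Fintype m] :
    (volume : Measure (S → m → ℝ)).IsAddHaarMeasure :=
  Measure.pi.isAddHaarMeasure fun _ => volume

/-- A fixed minor of the row-wise Khatri-Rao product is almost everywhere nonzero. -/
lemma ae_det_rowKhatriRao_submatrix_ne_zero {S m n : Type*} [Fintype S] [Fintype m] [Fintype n]
    {s : ℕ} {r : Fin s → S} (hr : r.Injective) {c : Fin s → m × n} (hc : c.Injective) :
    ∀ᵐ pq : (S → m → ℝ) × (S → n → ℝ),
      ((rowKhatriRao (Matrix.of pq.1) (Matrix.of pq.2)).submatrix r c).det ≠ 0 := by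
  obtain ⟨P₀, Q₀, h₀⟩ := exists_det_rowKhatriRao_submatrix_ne_zero hr hc
  have hcont : Continuous fun pq : (S → m → ℝ) × (S → n → ℝ) =>
      ((rowKhatriRao (Matrix.of pq.1) (Matrix.of pq.2)).submatrix r c).det := by
    refine Continuous.matrix_det (continuous_matrix fun i j => ?_)
    simp only [rowKhatriRao, Matrix.submatrix_apply, Matrix.of_apply]
    fun_prop
  have : (volume : Measure ((S → m → ℝ) × (S → n → ℝ))).IsAddHaarMeasure :=
    Measure.prod.instIsAddHaarMeasure volume volume
  refine ae_notMem_of_countable_lines volume (isClosed_singleton.preimage hcont).measurableSet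
    (v := ((P₀, Q₀) : (S → m → ℝ) × (S → n → ℝ))) fun pq => ?_
  have hfin := finite_setOf_det_rowKhatriRao_smul_add_eq_zero
    (P := Matrix.of pq.1) (Q := Matrix.of pq.2) h₀
  refine ((hfin.image (·⁻¹)).insert 0).countable.mono fun t ht => ?_
  rcases eq_or_ne t 0 with rfl | ht₀
  · exact Set.mem_insert _ _
  refine Set.mem_insert_of_mem _ ⟨t⁻¹, ?_, inv_inv t⟩
  have hP : t⁻¹ • Matrix.of pq.1 + P₀ = t⁻¹ • (Matrix.of pq.1 + t • P₀) := by
    ext i j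
    simp [mul_add, ht₀]
  have hQ : t⁻¹ • Matrix.of pq.2 + Q₀ = t⁻¹ • (Matrix.of pq.2 + t • Q₀) := by
    ext i j
    simp [mul_add, ht₀]
  have ht' : ((rowKhatriRao (Matrix.of pq.1 + t • P₀) (Matrix.of pq.2 + t • Q₀)).submatrix
      r c).det = 0 := ht
  simp only [Set.mem_ofPred_eq]
  rw [hP, hQ, rowKhatriRao_smul_smul, Matrix.submatrix_smul, Pi.smul_apply, Pi.smul_apply,
    Matrix.det_smul, ht', mul_zero]

/-- For Lebesgue-almost every `(P, Q)`, every square submatrix of the row-wise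
Khatri-Rao product `F = P ⊙ Q` is invertible: for every `s ≥ 1`, every
selection of `s` rows (an injection `r : Fin s ↪ Fin S`) and `s` columns (an
injection `c : Fin s ↪ Fin m × Fin n`), the submatrix `[F]_{R,C}` is
invertible. -/
theorem rowKhatriRao_ae_all_square_submatrices_invertible
    (m n S : ℕ) (hm : 1 ≤ m) (hn : 1 ≤ n) (hS : 1 ≤ S) :
    ∀ᵐ pq : (Fin S → Fin m → ℝ) × (Fin S → Fin n → ℝ) ∂volume,
      ∀ s : ℕ, 1 ≤ s →
        ∀ r : Fin s → Fin S, Function.Injective r →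
          ∀ c : Fin s → Fin m × Fin n, Function.Injective c →
            IsUnit
              ((rowKhatriRao (Matrix.of pq.1) (Matrix.of pq.2)).submatrix r c) := by
  refine ae_all_iff.2 fun s => ?_
  simp only [Filter.eventually_imp_distrib_left, ae_all_iff, Matrix.isUnit_iff_isUnit_det,
    isUnit_iff_ne_zero]
  exact fun _ r hr c hc => ae_det_rowKhatriRao_submatrix_ne_zero hr hc
end

section
/- (Systematic RKRP codes are MDS with probability 1.) Let m, n, S ≥ 1, set K = mn and N = K + S. For (P, Q) ∈ ℝ^{S×m} × ℝ^{S×n}, let F = P ⊙ Q be the S×K row-wise Khatri-Rao product and let G be the N×K matrix obtained by stacking the K×K identity matrix I_K on top of F. Then for Lebesgue-almost every pair (P, Q), for every subset R ⊆ [N] of row indices with |R| = K, the K×K submatrix of G consisting of the rows in R is invertible; i.e., G is almost surely the generator matrix of a maximum distance separable code. -/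
open MeasureTheory

/-- The systematic RKRP generator matrix: the `K × K` identity (rows indexed
by `Fin m × Fin n`, `K = mn`) stacked on top of `F = P ⊙ Q`, giving an
`N × K` matrix with `N = K + S` rows. -/
def systematicRKRP {S : Type*} {m n : ℕ}
    (P : Matrix S (Fin m) ℝ) (Q : Matrix S (Fin n) ℝ) :
    Matrix ((Fin m × Fin n) ⊕ S) (Fin m × Fin n) ℝ :=
  Matrix.fromRows (1 : Matrix (Fin m × Fin n) (Fin m × Fin n) ℝ)
    (rowKhatriRao P Q)

/-- The zero set of a real analytic function on a finite-dimensional space that is nonzero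
somewhere is a null set. -/
theorem AnalyticOnNhd.ae_ne_zero {E : Type*} [NormedAddCommGroup E] [NormedSpace ℝ E]
    [FiniteDimensional ℝ E] [MeasurableSpace E] [BorelSpace E] (μ : Measure E)
    [μ.IsAddHaarMeasure] {f : E → ℝ} (hf : AnalyticOnNhd ℝ f Set.univ) {x₀ : E}
    (hx₀ : f x₀ ≠ 0) : ∀ᵐ x ∂μ, f x ≠ 0 := by
  have hcont : Continuous f := continuousOn_univ.mp hf.continuousOn
  have hline (x : E) : ∀ᵐ t : ℝ, f (x₀ + t • x) ≠ 0 := by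
    have hg : AnalyticOnNhd ℝ (fun t : ℝ => f (x₀ + t • x)) Set.univ := fun t _ =>
      (hf _ trivial).fun_comp (by fun_prop : AnalyticAt ℝ (fun t : ℝ => x₀ + t • x) t)
    have hmem := hg.preimage_zero_mem_codiscrete (x := 0) (by simpa using hx₀)
    have := ae_restrict_le_codiscreteWithin (μ := volume) MeasurableSet.univ hmem
    rw [Measure.restrict_univ] at this
    filter_upwards [this] with t ht
    simpa using ht
  have hmeas : MeasurableSet {p : E × ℝ | f (x₀ + p.2 • p.1) ≠ 0} :=
    (isOpen_ne_fun (by fun_prop) continuous_const).measurableSet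
  have hswap : ∀ᵐ t : ℝ, ∀ᵐ x ∂μ, f (x₀ + t • x) ≠ 0 :=
    (Measure.ae_ae_comm hmeas).mp (.of_forall hline)
  obtain ⟨t, ht, ht0⟩ := (hswap.and (Measure.ae_ne volume (0 : ℝ))).exists
  have hscale : ∀ᵐ y ∂μ, f (x₀ + y) ≠ 0 := by
    rw [ae_iff] at ht ⊢
    have := Measure.addHaar_preimage_smul μ ht0 {y | ¬ f (x₀ + y) ≠ 0}
    simp only [Set.preimage_ofPred_eq, ht] at this
    simpa [ht0] using this.symm
  rw [ae_iff] at hscale ⊢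
  rwa [← measure_preimage_add μ x₀]

/-- Any choice of `K` rows of a systematic generator matrix can be completed to a bijection onto
the `K` columns by sending the selected parity rows to the unselected systematic ones. -/
theorem exists_injective_sumElim_comp {ι α β : Type*} [Fintype ι] [Fintype α] [Nonempty α]
    (hcard : Fintype.card ι = Fintype.card α) {r : ι → α ⊕ β} (hr : Function.Injective r) :
    ∃ g : β → α, Function.Injective (Sum.elim id g ∘ r) := by
  classical
  let A : Finset α := (Finset.univ.image r).toLeft
  let T : Finset β := (Finset.univ.image r).toRight
  have hAT : A.card + T.card = Fintype.card α := by
    rw [Finset.card_toLeft_add_card_toRight, Finset.card_image_of_injective _ hr,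
      Finset.card_univ, hcard]
  have hle : Fintype.card T ≤ Fintype.card (Aᶜ : Finset α) := by
    simp only [Fintype.card_coe, Finset.card_compl]
    omega
  obtain ⟨e⟩ := Function.Embedding.nonempty_of_card_le hle
  have hA {i a} (h : r i = .inl a) : a ∈ A := by
    simpa [A] using ⟨i, h⟩
  have hT {i b} (h : r i = .inr b) : b ∈ T := by
    simpa [T] using ⟨i, h⟩
  refine ⟨fun b => if h : b ∈ T then e ⟨b, h⟩ else Classical.arbitrary α, fun i j hij => hr ?_⟩
  have he (b : T) : (e b : α) ∉ A := Finset.mem_compl.mp (e b).2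
  rcases hi : r i with a | b <;> rcases hj : r j with a' | b' <;>
    simp only [Function.comp_apply, hi, hj, Sum.elim_inl, Sum.elim_inr, id] at hij
  · rw [hij]
  · rw [dif_pos (hT hj)] at hij
    exact absurd (hij ▸ hA hi) (he _)
  · rw [dif_pos (hT hi)] at hij
    exact absurd (hij ▸ hA hj) (he _)
  · rw [dif_pos (hT hi), dif_pos (hT hj)] at hij
    simpa using e.injective (Subtype.ext hij)

/-- If every row of `P` and `Q` is a standard basis vector, then so is every row of the systematic
generator matrix. -/
theorem systematicRKRP_single {S : Type*} {m n : ℕ} (g : S → Fin m × Fin n) :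
    systematicRKRP (Matrix.of fun i => Pi.single (g i).1 1)
        (Matrix.of fun i => Pi.single (g i).2 1) =
      (1 : Matrix (Fin m × Fin n) (Fin m × Fin n) ℝ).submatrix (Sum.elim id g) id := by
  ext (i | i) ⟨j, l⟩
  · rfl
  · simp only [systematicRKRP, rowKhatriRao, Matrix.fromRows_apply_inr, Matrix.of_apply,
      Matrix.submatrix_apply, Sum.elim_inr, Matrix.one_apply, Pi.single_apply, id, Prod.ext_iff,
      ite_and, eq_comm (a := j), eq_comm (a := l)]
    split_ifs <;> simp

theorem analyticAt_det_submatrix_systematicRKRP {m n S : ℕ} {ι : Type*} [Fintype ι]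
    [DecidableEq ι] (r : ι → (Fin m × Fin n) ⊕ Fin S) (c : ι → Fin m × Fin n)
    (pq : (Fin S → Fin m → ℝ) × (Fin S → Fin n → ℝ)) :
    AnalyticAt ℝ (fun pq : (Fin S → Fin m → ℝ) × (Fin S → Fin n → ℝ) =>
      ((systematicRKRP (Matrix.of pq.1) (Matrix.of pq.2)).submatrix r c).det) pq := by
  have hP (i : Fin S) (j : Fin m) :
      AnalyticAt ℝ (fun pq : (Fin S → Fin m → ℝ) × (Fin S → Fin n → ℝ) => pq.1 i j) pq :=
    ((ContinuousLinearMap.proj (R := ℝ) (φ := fun _ : Fin m => ℝ) j).comp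
      ((ContinuousLinearMap.proj (R := ℝ) (φ := fun _ : Fin S => Fin m → ℝ) i).comp
        (ContinuousLinearMap.fst ℝ _ _))).analyticAt pq
  have hQ (i : Fin S) (l : Fin n) :
      AnalyticAt ℝ (fun pq : (Fin S → Fin m → ℝ) × (Fin S → Fin n → ℝ) => pq.2 i l) pq :=
    ((ContinuousLinearMap.proj (R := ℝ) (φ := fun _ : Fin n => ℝ) l).comp
      ((ContinuousLinearMap.proj (R := ℝ) (φ := fun _ : Fin S => Fin n → ℝ) i).comp
        (ContinuousLinearMap.snd ℝ _ _))).analyticAt pq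
  simp only [Matrix.det_apply', Matrix.submatrix_apply]
  refine Finset.analyticAt_fun_sum _ fun σ _ => analyticAt_const.mul <|
    Finset.analyticAt_fun_prod _ fun i _ => ?_
  rcases r (σ i) with a | s
  · simpa only [systematicRKRP, Matrix.fromRows_apply_inl] using analyticAt_const
  · exact (hP s _).mul (hQ s _)

/-- Systematic RKRP codes are MDS with probability 1: for Lebesgue-almost
every `(P, Q)`, every `K × K` submatrix of `G = [I_K ; P ⊙ Q]` obtained by
selecting any `K = mn` of its `N = K + S` rows is invertible. -/
theorem systematic_RKRP_is_MDS (m n S : ℕ)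
    (hm : 1 ≤ m) (hn : 1 ≤ n) (hS : 1 ≤ S) :
    ∀ᵐ pq : (Fin S → Fin m → ℝ) × (Fin S → Fin n → ℝ) ∂volume,
      ∀ r : Fin (m * n) → (Fin m × Fin n) ⊕ Fin S, Function.Injective r →
        IsUnit
          ((systematicRKRP (Matrix.of pq.1) (Matrix.of pq.2)).submatrix r
            (⇑finProdFinEquiv.symm)) := by
  refine ae_all_iff.mpr fun r => ?_
  by_cases hr : Function.Injective r
  swap
  · exact .of_forall fun _ h => absurd h hr
  have : Nonempty (Fin m × Fin n) := ⟨⟨0, hm⟩, ⟨0, hn⟩⟩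
  obtain ⟨g, hg⟩ := exists_injective_sumElim_comp (by simp) hr
  have hbij := (Fintype.bijective_iff_injective_and_card _).mpr ⟨hg, by simp⟩
  have hdet : ((systematicRKRP (Matrix.of fun i => Pi.single (g i).1 1)
      (Matrix.of fun i => Pi.single (g i).2 1)).submatrix r finProdFinEquiv.symm).det ≠ 0 := by
    rw [systematicRKRP_single, Matrix.submatrix_submatrix, ← isUnit_iff_ne_zero,
      ← Matrix.isUnit_iff_isUnit_det]
    exact (Matrix.isUnit_submatrix_equiv (Equiv.ofBijective _ hbij) finProdFinEquiv.symm).mpr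
      isUnit_one
  have hpi (k : ℕ) : (volume : Measure (Fin S → Fin k → ℝ)).IsAddHaarMeasure :=
    Measure.pi.isAddHaarMeasure _
  have : (volume : Measure ((Fin S → Fin m → ℝ) × (Fin S → Fin n → ℝ))).IsAddHaarMeasure :=
    Measure.prod.instIsAddHaarMeasure _ _
  filter_upwards [AnalyticOnNhd.ae_ne_zero volume
    (fun pq _ => analyticAt_det_submatrix_systematicRKRP r finProdFinEquiv.symm pq)
    (x₀ := (fun i => Pi.single (g i).1 1, fun i => Pi.single (g i).2 1)) hdet] with pq hpq _
  exact (Matrix.isUnit_iff_isUnit_det _).mpr (isUnit_iff_ne_zero.mpr hpq)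
end

section
/- Let m, n, S ≥ 1, set K = mn and N = K + S, and let μ be a probability measure on ℝ that is absolutely continuous with respect to Lebesgue measure. Let the S·m + S·n entries of the random matrices P ∈ ℝ^{S×m} and Q ∈ ℝ^{S×n} be i.i.d. with common law μ, and let G be the N×K matrix whose first K rows form the identity matrix I_K and whose last S rows form the row-wise Khatri-Rao product F = P ⊙ Q. Then with probability 1, every K×K submatrix of G formed by selecting any K of its N rows is invertible. -/
open MeasureTheory

/-- The zero set of a nonzero polynomial in finitely many ordered variables is null for the power
of an atomless measure. -/
theorem MvPolynomial.ae_eval_ne_zero_fin {μ : Measure ℝ} [SigmaFinite μ] [NullSingletonClass μ] {n : ℕ}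
    {p : MvPolynomial (Fin n) ℝ} (hp : p ≠ 0) :
    ∀ᵐ x : Fin n → ℝ ∂(Measure.pi fun _ => μ), MvPolynomial.eval x p ≠ 0 := by
  induction n with
  | zero =>
    refine Filter.Eventually.of_forall fun x hx => hp ?_
    refine MvPolynomial.funext fun y => ?_
    rw [Subsingleton.elim y x, hx, map_zero]
  | succ n ih =>
    have hq : MvPolynomial.finSuccEquiv ℝ n p ≠ 0 := by simpa using hp
    have hpres := (measurePreserving_piFinSuccAbove (fun _ : Fin (n + 1) => μ) 0).symm
    have hmeas : MeasurableSet
        {z : ℝ × (Fin n → ℝ) | MvPolynomial.eval (Fin.cons z.1 z.2 : Fin (n + 1) → ℝ) p ≠ 0} := by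
      have hcont : Continuous fun z : ℝ × (Fin n → ℝ) =>
          MvPolynomial.eval (Fin.cons z.1 z.2 : Fin (n + 1) → ℝ) p :=
        (MvPolynomial.continuous_eval p).comp (by fun_prop)
      exact (isOpen_ne_fun hcont continuous_const).measurableSet
    rw [← hpres.map_eq, (MeasurableEquiv.measurableEmbedding _).ae_map_iff]
    have hcons : ∀ z : ℝ × (Fin n → ℝ),
        (MeasurableEquiv.piFinSuccAbove (fun _ : Fin (n + 1) => ℝ) 0).symm z =
          Fin.cons z.1 z.2 := fun z => by
      simp [MeasurableEquiv.piFinSuccAbove, Fin.consEquiv]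
    simp only [hcons]
    rw [Measure.ae_prod_iff_ae_ae hmeas, Measure.ae_ae_comm hmeas]
    filter_upwards [ih (Polynomial.leadingCoeff_ne_zero.2 hq)] with y hy
    have hmap : (MvPolynomial.finSuccEquiv ℝ n p).map (MvPolynomial.eval y) ≠ 0 := fun h =>
      hy (by simpa [Polynomial.coeff_map] using
        congrArg (Polynomial.coeff · (MvPolynomial.finSuccEquiv ℝ n p).natDegree) h)
    have hroots := (Polynomial.finite_setOfPred_isRoot hmap).measure_zero μ
    filter_upwards [measure_eq_zero_iff_ae_notMem.1 hroots] with x hx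
    rwa [MvPolynomial.eval_eq_eval_mv_eval']

/-- The zero set of a nonzero polynomial in finitely many variables is null for the power of an
atomless measure. -/
theorem MvPolynomial.ae_eval_ne_zero {σ : Type*} [Fintype σ] {μ : Measure ℝ} [SigmaFinite μ]
    [NullSingletonClass μ] {p : MvPolynomial σ ℝ} (hp : p ≠ 0) :
    ∀ᵐ x : σ → ℝ ∂(Measure.pi fun _ => μ), MvPolynomial.eval x p ≠ 0 := by
  let e := (Fintype.equivFin σ).symm
  have hq : MvPolynomial.rename e.symm p ≠ 0 := by
    rwa [Ne, map_eq_zero_iff _ (MvPolynomial.rename_injective _ e.symm.injective)]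
  rw [← (measurePreserving_piCongrLeft (fun _ : σ => μ) e).map_eq, (MeasurableEquiv.measurableEmbedding _).ae_map_iff]
  filter_upwards [MvPolynomial.ae_eval_ne_zero_fin hq] with x hx
  rw [MvPolynomial.eval_rename] at hx
  convert hx using 3
  funext i
  obtain ⟨j, rfl⟩ := e.surjective i
  rw [MeasurableEquiv.piCongrLeft_apply_apply, Function.comp_apply, e.symm_apply_apply]

/-- An injective selection of `K` rows of `[I_K ; F]` becomes a bijection onto the columns once
each row of `F` is replaced by a suitable standard basis vector. -/
theorem exists_equiv_sumElim_comp_eq {κ α β : Type*} [Fintype κ] [Fintype α] [Nonempty α]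
    (hcard : Fintype.card κ = Fintype.card α) {r : κ → α ⊕ β} (hr : Function.Injective r) :
    ∃ (g : β → α) (e : κ ≃ α), ∀ k, Sum.elim id g (r k) = e k := by
  classical
  obtain ⟨a₀⟩ := ‹Nonempty α›
  obtain ⟨e, he⟩ := Set.MapsTo.exists_equiv_extend_of_card_eq (t := Finset.univ)
    (s := {k | (r k).isLeft}) (f := fun k => Sum.elim id (fun _ => a₀) (r k))
    (by simpa using hcard) (fun _ _ => by simp) (by
      intro k hk l hl hkl
      obtain ⟨a, ha⟩ := Sum.isLeft_iff.1 hk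
      obtain ⟨b, hb⟩ := Sum.isLeft_iff.1 hl
      refine hr ?_
      simpa [ha, hb] using hkl)
  refine ⟨fun i => Function.extend r (fun k => (e k : α)) (fun _ => a₀) (Sum.inr i),
    e.trans (Equiv.subtypeUnivEquiv (by simp)), fun k => ?_⟩
  rcases h : r k with a | i
  · simpa [h] using (he k (by simp [h])).symm
  · rw [Sum.elim_inr, ← h, hr.extend_apply]
    rfl

/-- The matrix of polynomials whose values are the selected rows of the systematic generator
matrix. -/
noncomputable def systematicRKRPPolynomial {κ S : Type*} {m n : ℕ}
    (r : κ → (Fin m × Fin n) ⊕ S) (c : κ → Fin m × Fin n) :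
    Matrix κ κ (MvPolynomial ((S × Fin m) ⊕ (S × Fin n)) ℝ) :=
  Matrix.of fun k l => Sum.elim (fun a => if a = c l then 1 else 0)
    (fun i => MvPolynomial.X (Sum.inl (i, (c l).1)) * MvPolynomial.X (Sum.inr (i, (c l).2))) (r k)

theorem eval_det_systematicRKRPPolynomial {κ S : Type*} [Fintype κ] [DecidableEq κ] {m n : ℕ}
    (r : κ → (Fin m × Fin n) ⊕ S) (c : κ → Fin m × Fin n)
    (x : (S × Fin m) ⊕ (S × Fin n) → ℝ) :
    MvPolynomial.eval x (systematicRKRPPolynomial r c).det =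
      ((systematicRKRP (Matrix.of fun i j => x (Sum.inl (i, j)))
        (Matrix.of fun i l => x (Sum.inr (i, l)))).submatrix r c).det := by
  rw [RingHom.map_det]
  congr 1
  ext k l
  rcases h : r k with a | i
  · simp [systematicRKRPPolynomial, systematicRKRP, h, Matrix.one_apply, apply_ite]
  · simp [systematicRKRPPolynomial, systematicRKRP, h, rowKhatriRao]

theorem det_systematicRKRPPolynomial_ne_zero {κ S : Type*} [Fintype κ] [DecidableEq κ] {m n : ℕ}
    [Nonempty (Fin m × Fin n)] {r : κ → (Fin m × Fin n) ⊕ S} (hr : Function.Injective r)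
    (c : κ ≃ Fin m × Fin n) : (systematicRKRPPolynomial r c).det ≠ 0 := by
  obtain ⟨g, e, hge⟩ := exists_equiv_sumElim_comp_eq (Fintype.card_congr c) hr
  intro h
  have hdet := eval_det_systematicRKRPPolynomial r c
    (Sum.elim (fun ij => if (g ij.1).1 = ij.2 then 1 else 0)
      (fun il => if (g il.1).2 = il.2 then 1 else 0))
  have hperm : (systematicRKRP
      (Matrix.of fun i j => if (g i).1 = j then (1 : ℝ) else 0)
      (Matrix.of fun i l => if (g i).2 = l then (1 : ℝ) else 0)).submatrix r c =
      (1 : Matrix (Fin m × Fin n) (Fin m × Fin n) ℝ).submatrix e c := by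
    ext k l
    rw [Matrix.submatrix_apply, Matrix.submatrix_apply, ← hge k]
    rcases r k with a | i
    · rfl
    · simp [systematicRKRP, rowKhatriRao, Matrix.one_apply, Prod.ext_iff, ← ite_and, and_comm]
  have hunit : IsUnit ((1 : Matrix (Fin m × Fin n) (Fin m × Fin n) ℝ).submatrix e c) :=
    (Matrix.isUnit_submatrix_equiv e c).2 isUnit_one
  rw [h, map_zero] at hdet
  simp only [Sum.elim_inl, Sum.elim_inr] at hdet
  rw [hperm] at hdet
  exact ((Matrix.isUnit_iff_isUnit_det _).1 hunit).ne_zero hdet.symm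

/-- If the `Sm + Sn` entries of `P` and `Q` are i.i.d. with common law `μ`
absolutely continuous w.r.t. Lebesgue measure, then with probability 1 every
`K × K` submatrix of the systematic generator matrix `G = [I_K ; P ⊙ Q]`
formed by selecting any `K = mn` of its `N = K + S` rows is invertible. -/
theorem systematic_RKRP_is_MDS_prob (m n S : ℕ)
    (hm : 1 ≤ m) (hn : 1 ≤ n) (hS : 1 ≤ S)
    (μ : Measure ℝ) [IsProbabilityMeasure μ] (hμ : μ ≪ volume) :
    ∀ᵐ x : ((Fin S × Fin m) ⊕ (Fin S × Fin n)) → ℝ ∂(Measure.pi fun _ => μ),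
      ∀ r : Fin (m * n) → (Fin m × Fin n) ⊕ Fin S, Function.Injective r →
        IsUnit
          ((systematicRKRP
              (Matrix.of fun i j => x (Sum.inl (i, j)))
              (Matrix.of fun i l => x (Sum.inr (i, l)))).submatrix r
            (⇑finProdFinEquiv.symm)) := by
  have : NullSingletonClass μ := ⟨fun a => hμ (measure_singleton a)⟩
  have : Nonempty (Fin m × Fin n) := ⟨(⟨0, hm⟩, ⟨0, hn⟩)⟩
  rw [ae_all_iff]
  intro r
  by_cases hr : Function.Injective r
  · filter_upwards [MvPolynomial.ae_eval_ne_zero (μ := μ)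
      (det_systematicRKRPPolynomial_ne_zero hr finProdFinEquiv.symm)] with x hx _
    rw [eval_det_systematicRKRPPolynomial] at hx
    exact (Matrix.isUnit_iff_isUnit_det _).2 hx.isUnit
  · exact Filter.Eventually.of_forall fun x h => absurd h hr
end
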